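/- arXiv:2505.06174 — 2 statements merged into one kernel-verified Lean document; each statement's English description precedes it below -/
import Mathlib

section
/- For any δ > 0 and any 0 < ρ < 1, every injective deterministic coding scheme Enc : F^k → F^n, Dec : F^n → F^k ∪ {⊥} over a finite field F with q elements that is a weak (0,δ)-AMD code is also a weak (ρ, q^{ρn}·δ)-AMD code. -/
open scoped Classical BigOperators

/-- Probability of an event `E` under a finitely supported probability mass function `p`. -/
noncomputable def pr {Ω : Type*} [Fintype Ω] (p : Ω → ℝ) (E : Ω → Prop) : ℝ :=
  ∑ ω : Ω, if E ω then p ω else 0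

/-- Min-entropy `H∞(X) = -log₂ max_x Pr[X = x]`. -/
noncomputable def minEntropy {Ω α : Type*} [Fintype Ω] [Fintype α]
    (p : Ω → ℝ) (X : Ω → α) : ℝ :=
  - Real.logb 2 (⨆ x : α, pr p (fun ω => X ω = x))

/-- Conditional (average) min-entropy
`H̃∞(X|Z) = -log₂ Σ_z Pr[Z=z] · max_x Pr[X=x | Z=z] = -log₂ Σ_z max_x Pr[X=x ∧ Z=z]`. -/
noncomputable def condMinEntropy {Ω α β : Type*} [Fintype Ω] [Fintype α] [Fintype β]
    (p : Ω → ℝ) (X : Ω → α) (Z : Ω → β) : ℝ :=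
  - Real.logb 2 (∑ z : β, ⨆ x : α, pr p (fun ω => X ω = x ∧ Z ω = z))

/-- A deterministic coding scheme `(Enc, Dec)` (codeword length `n` over an alphabet of
size `q`) is a weak `(ρ, δ)`-AMD code: for every probability space, every uniform
message `M`, every leakage `Z` (jointly distributed with `M`) satisfying
`H̃∞(Enc(M) | Z) ≥ H∞(Enc(M)) − ρ·n·log₂ q`, and every function `A : 𝒵 → C`,
`Pr[Dec(Enc(M) + A(Z)) ∉ {M, ⊥}] ≤ δ`. -/
def IsWeakAMD {Msg C : Type*} [Fintype Msg] [Fintype C] [Add C]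
    (Enc : Msg → C) (Dec : C → Option Msg) (n q : ℕ) (ρ δ : ℝ) : Prop :=
  ∀ (Ω : Type) [Fintype Ω] (p : Ω → ℝ),
    (∀ ω, 0 ≤ p ω) → (∑ ω : Ω, p ω) = 1 →
    ∀ (M : Ω → Msg),
      (∀ m : Msg, pr p (fun ω => M ω = m) = 1 / (Fintype.card Msg : ℝ)) →
      ∀ (ZS : Type) [Fintype ZS] (Z : Ω → ZS),
        condMinEntropy p (fun ω => Enc (M ω)) Z
          ≥ minEntropy p (fun ω => Enc (M ω)) - ρ * n * Real.logb 2 q →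
        ∀ (A : ZS → C),
          pr p (fun ω => Dec (Enc (M ω) + A (Z ω))
              ∉ ({some (M ω), none} : Set (Option Msg))) ≤ δ

/-! Without leakage, a fixed offset succeeds on at most `δ |Msg|` messages. An adversary who sees
`Z` picks an offset for each leakage value, so it succeeds with probability at most `δ |Msg|` times
the probability of guessing `M` from `Z`. Injectivity of `Enc` makes the entropies of `Enc(M)` those
of `M`, and the bound on the leakage limits this guessing probability to `q ^ (ρ n) / |Msg|`. -/

theorem iSup_eq_iSup_comp_of_support_subset {α β : Type*} {f : α → β} {g : β → ℝ}
    (hg : ∀ y, 0 ≤ g y) (hbdd : BddAbove (Set.range g))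
    (hsupp : Function.support g ⊆ Set.range f) :
    ⨆ y, g y = ⨆ x, g (f x) := by
  have hbdd_comp : BddAbove (Set.range fun x => g (f x)) :=
    hbdd.mono (Set.range_comp_subset_range f g)
  have hnonneg : 0 ≤ ⨆ x, g (f x) := Real.iSup_nonneg fun x => hg (f x)
  refine le_antisymm (Real.iSup_le (fun y => ?_) hnonneg)
    (Real.iSup_le (fun x => le_ciSup hbdd (f x)) (Real.iSup_nonneg hg))
  by_cases hy : y ∈ Set.range f
  · obtain ⟨x, rfl⟩ := hy
    exact le_ciSup hbdd_comp x
  · exact (Function.support_subset_iff'.1 hsupp y hy).trans_le hnonneg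

section Probability

variable {Ω α β : Type*} [Fintype Ω] {p : Ω → ℝ}

theorem pr_nonneg (hp : ∀ ω, 0 ≤ p ω) (E : Ω → Prop) : 0 ≤ pr p E :=
  Finset.sum_nonneg fun ω _ => ite_nonneg (hp ω) le_rfl

theorem pr_eq_zero {E : Ω → Prop} (hE : ∀ ω, ¬ E ω) : pr p E = 0 :=
  Finset.sum_eq_zero fun ω _ => if_neg (hE ω)

theorem pr_eq_sum_pr_and [Fintype β] (p : Ω → ℝ) (E : Ω → Prop) (Y : Ω → β) :
    pr p E = ∑ y, pr p (fun ω => E ω ∧ Y ω = y) := by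
  simp only [pr]
  rw [Finset.sum_comm]
  refine Finset.sum_congr rfl fun ω _ => ?_
  by_cases hE : E ω <;> simp [hE]

theorem pr_eq_sum_sum_filter [Fintype α] [Fintype β] (p : Ω → ℝ) (X : Ω → α) (Z : Ω → β)
    (W : α → β → Prop) [∀ z, DecidablePred (W · z)] :
    pr p (fun ω => W (X ω) (Z ω)) =
      ∑ z, ∑ x with W x z, pr p (fun ω => X ω = x ∧ Z ω = z) := by
  rw [pr_eq_sum_pr_and p _ Z]
  refine Finset.sum_congr rfl fun z _ => ?_
  rw [pr_eq_sum_pr_and p _ X, Finset.sum_filter]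
  refine Finset.sum_congr rfl fun x _ => ?_
  split_ifs with hW
  · congr 1 with ω
    constructor
    · rintro ⟨⟨-, hz⟩, hx⟩
      exact ⟨hx, hz⟩
    · rintro ⟨rfl, rfl⟩
      exact ⟨⟨hW, rfl⟩, rfl⟩
  · refine pr_eq_zero ?_
    rintro ω ⟨⟨hWω, rfl⟩, rfl⟩
    exact hW hWω

end Probability

/-- The guessing probability `Σ_z max_x Pr[X = x ∧ Z = z]`, which is the optimal probability of
guessing `X` from `Z` and hence `2 ^ (-H̃∞(X|Z))`. -/
noncomputable def guessingProb {Ω α β : Type*} [Fintype Ω] [Fintype β]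
    (p : Ω → ℝ) (X : Ω → α) (Z : Ω → β) : ℝ :=
  ∑ z : β, ⨆ x : α, pr p (fun ω => X ω = x ∧ Z ω = z)

section MinEntropy

variable {Ω α β γ : Type*} [Fintype Ω] [Fintype α] {p : Ω → ℝ}

theorem minEntropy_comp_of_injective [Fintype γ] (hp : ∀ ω, 0 ≤ p ω) (X : Ω → α) {f : α → γ}
    (hf : Function.Injective f) :
    minEntropy p (fun ω => f (X ω)) = minEntropy p X := by
  have hsup := iSup_eq_iSup_comp_of_support_subset (f := f)
    (fun y => pr_nonneg hp (fun ω => f (X ω) = y))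
    (Set.finite_range _).bddAbove <| Function.support_subset_iff'.2 fun y hy =>
      pr_eq_zero fun ω hω => hy ⟨X ω, hω⟩
  simp only [minEntropy, hsup, hf.eq_iff]

theorem condMinEntropy_comp_of_injective [Fintype β] [Fintype γ] (hp : ∀ ω, 0 ≤ p ω)
    (X : Ω → α) (Z : Ω → β) {f : α → γ} (hf : Function.Injective f) :
    condMinEntropy p (fun ω => f (X ω)) Z = condMinEntropy p X Z := by
  have hsup (z : β) := iSup_eq_iSup_comp_of_support_subset (f := f)
    (fun y => pr_nonneg hp (fun ω => f (X ω) = y ∧ Z ω = z))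
    (Set.finite_range _).bddAbove <| Function.support_subset_iff'.2 fun y hy =>
      pr_eq_zero fun ω hω => hy ⟨X ω, hω.1⟩
  simp only [condMinEntropy, hsup, hf.eq_iff]

theorem minEntropy_eq_logb_card_of_uniform [Nonempty α] {X : Ω → α}
    (hX : ∀ x, pr p (fun ω => X ω = x) = 1 / (Fintype.card α : ℝ)) :
    minEntropy p X = Real.logb 2 (Fintype.card α) := by
  simp only [minEntropy, hX, ciSup_const, one_div, Real.logb_inv, neg_neg]

theorem guessingProb_le_two_rpow_neg_condMinEntropy [Fintype β] (hp : ∀ ω, 0 ≤ p ω)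
    (X : Ω → α) (Z : Ω → β) :
    guessingProb p X Z ≤ 2 ^ (-condMinEntropy p X Z) := by
  have hnonneg : 0 ≤ guessingProb p X Z :=
    Finset.sum_nonneg fun z _ => Real.iSup_nonneg fun x => pr_nonneg hp _
  obtain hzero | hpos := hnonneg.eq_or_lt
  · exact hzero.symm.trans_le (by positivity)
  · change guessingProb p X Z ≤ 2 ^ (- -Real.logb 2 (guessingProb p X Z))
    rw [neg_neg, Real.rpow_logb two_pos (by norm_num) hpos]

theorem guessingProb_le_of_uniform_of_leakage [Nonempty α] [Fintype β] (hp : ∀ ω, 0 ≤ p ω)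
    {X : Ω → α} (hX : ∀ x, pr p (fun ω => X ω = x) = 1 / (Fintype.card α : ℝ))
    {Z : Ω → β} {l : ℝ} (hl : minEntropy p X - l ≤ condMinEntropy p X Z) :
    guessingProb p X Z ≤ 2 ^ l / Fintype.card α := by
  rw [minEntropy_eq_logb_card_of_uniform hX] at hl
  calc guessingProb p X Z
      ≤ 2 ^ (-condMinEntropy p X Z) := guessingProb_le_two_rpow_neg_condMinEntropy hp X Z
    _ ≤ 2 ^ (l - Real.logb 2 (Fintype.card α)) :=
        Real.rpow_le_rpow_of_exponent_le one_le_two (by linarith)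
    _ = 2 ^ l / Fintype.card α := by
        rw [Real.rpow_sub two_pos, Real.rpow_logb two_pos (by norm_num)
          (Nat.cast_pos.2 Fintype.card_pos)]

theorem pr_le_mul_guessingProb [Fintype β] (hp : ∀ ω, 0 ≤ p ω) (X : Ω → α) (Z : Ω → β)
    {W : α → β → Prop} [∀ z, DecidablePred (W · z)] {N : ℝ}
    (hW : ∀ z, (Finset.card {x | W x z} : ℝ) ≤ N) :
    pr p (fun ω => W (X ω) (Z ω)) ≤ N * guessingProb p X Z := by
  rw [pr_eq_sum_sum_filter, guessingProb, Finset.mul_sum]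
  refine Finset.sum_le_sum fun z _ => ?_
  set s : ℝ := ⨆ x, pr p (fun ω => X ω = x ∧ Z ω = z)
  have hle (x : α) : pr p (fun ω => X ω = x ∧ Z ω = z) ≤ s :=
    le_ciSup (f := fun x => pr p (fun ω => X ω = x ∧ Z ω = z)) (Set.finite_range _).bddAbove x
  have hs : 0 ≤ s := Real.iSup_nonneg fun x => pr_nonneg hp _
  calc ∑ x with W x z, pr p (fun ω => X ω = x ∧ Z ω = z)
      ≤ Finset.card {x | W x z} * s := by
        rw [← nsmul_eq_mul]
        exact Finset.sum_le_card_nsmul _ _ _ fun x _ => hle x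
    _ ≤ N * s := mul_le_mul_of_nonneg_right (hW z) hs

end MinEntropy

theorem stmt5_general {Msg C : Type*} [Fintype Msg] [Fintype C] [Add C]
    {Enc : Msg → C} {Dec : C → Option Msg} (hEnc : Function.Injective Enc)
    (n : ℕ) {q : ℕ} (hq : 0 < q) (ρ : ℝ) {δ : ℝ}
    (h0 : ∀ a : C,
      (Finset.card {m : Msg | Dec (Enc m + a) ∉ ({some m, none} : Set (Option Msg))} : ℝ)
        / (Fintype.card Msg : ℝ) ≤ δ) :
    IsWeakAMD Enc Dec n q ρ ((q : ℝ) ^ (ρ * n) * δ) := by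
  intro Ω _ p hp hsum M hM ZS _ Z hH A
  obtain ⟨ω⟩ : Nonempty Ω := not_isEmpty_iff.1 fun _ => by simp at hsum
  have : Nonempty Msg := ⟨M ω⟩
  have hcard : (0 : ℝ) < Fintype.card Msg := Nat.cast_pos.2 Fintype.card_pos
  have hδ : 0 ≤ δ := le_trans (by positivity) (h0 (Enc (M ω)))
  rw [condMinEntropy_comp_of_injective hp M Z hEnc, minEntropy_comp_of_injective hp M hEnc] at hH
  have hguess : guessingProb p M Z ≤ (q : ℝ) ^ (ρ * n) / Fintype.card Msg := by
    have h := guessingProb_le_of_uniform_of_leakage hp hM hH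
    rwa [mul_comm (ρ * n), Real.rpow_mul two_pos.le,
      Real.rpow_logb two_pos (by norm_num) (Nat.cast_pos.2 hq)] at h
  calc pr p (fun ω => Dec (Enc (M ω) + A (Z ω)) ∉ ({some (M ω), none} : Set (Option Msg)))
      ≤ δ * Fintype.card Msg * guessingProb p M Z :=
        pr_le_mul_guessingProb hp M Z
          (W := fun m z => Dec (Enc m + A z) ∉ ({some m, none} : Set (Option Msg)))
          fun z => (div_le_iff₀ hcard).1 (h0 (A z))
    _ ≤ δ * Fintype.card Msg * ((q : ℝ) ^ (ρ * n) / Fintype.card Msg) := by gcongr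
    _ = (q : ℝ) ^ (ρ * n) * δ := by field_simp

/-- every injective deterministic coding scheme that is a weak `(0, δ)`-AMD
code (equivalently: every fixed offset succeeds with probability at most `δ` over a
uniform message) is also a weak `(ρ, q^{ρn}·δ)`-AMD code. -/
theorem stmt5 {F : Type*} [Field F] [Fintype F] (k n : ℕ)
    (δ ρ : ℝ) (hδ : 0 < δ) (hρ0 : 0 < ρ) (hρ1 : ρ < 1)
    (Enc : (Fin k → F) → (Fin n → F))
    (Dec : (Fin n → F) → Option (Fin k → F))
    (hcode : ∀ m, Dec (Enc m) = some m)
    (hreg : Function.Injective Enc)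
    (h0 : ∀ a : Fin n → F,
      ((Finset.univ.filter (fun m : Fin k → F =>
          Dec (Enc m + a) ∉ ({some m, none} : Set (Option (Fin k → F))))).card : ℝ)
        / (Fintype.card F : ℝ) ^ k ≤ δ) :
    IsWeakAMD Enc Dec n (Fintype.card F)
      ρ ((Fintype.card F : ℝ) ^ (ρ * n) * δ) := by
  refine stmt5_general hreg n Fintype.card_pos ρ fun a => ?_
  simpa using h0 a
end

section
/- Let F be a finite field with q elements and let k, σ be positive integers with (k+2)·1_F ≠ 0 in F. Define f(m,a) = a^{k+2} + Σ_{i=1}^k m_i a^i, Enc(m,x) = (m, x, f(m,x_1), …, f(m,x_σ)) ∈ F^{k+2σ} for m ∈ F^k, x ∈ F^σ, and Dec(m', x', y_1, …, y_σ) = m' if y_j = f(m', x'_j) for all j ∈ [σ] and ⊥ otherwise. Then (Enc, Dec) is a regular coding scheme and a strong (0, ((k+1)/q)^σ)-AMD code: for every m ∈ F^k and every (α, β, γ) ∈ F^k × F^σ × F^σ, with X uniform on F^σ, Pr[Dec(Enc(m,X) + (α,β,γ)) ∉ {m, ⊥}] ≤ ((k+1)/q)^σ. -/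
open scoped Classical BigOperators

/-!
If the message offset `α` vanishes, the decoder can only output `m` or `⊥`. Otherwise the forgery
`(α, β, γ)` goes through exactly when every coordinate `a = x_j` is a root of
`f(m + α, X + β_j) - f(m, X) - γ_j`. The leading terms cancel, so this polynomial has degree at
most `k + 1`. As `f` has no term of degree `k + 1`, the coefficient of `X ^ (k + 1)` in it is
`(k + 2) β_j`. The polynomial is therefore nonzero: if `β_j = 0`, then the coefficients of the
`X ^ i` with `1 ≤ i ≤ k` are the `α_i`, not all of which vanish. So each of the `σ` independent
coordinates has at most `k + 1` bad values.
-/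

open Polynomial

section Tagging

variable {M K T : Type*} {s : ℕ}

/-- The systematic encoder of a tag function with `s` independent keys: the pair of a message and a
vector of keys is sent together with the tag of the message under each key. -/
def tagEncode (tag : M → K → T) (mx : M × (Fin s → K)) : M × (Fin s → K) × (Fin s → T) :=
  (mx.1, mx.2, fun j => tag mx.1 (mx.2 j))

/-- The verifying decoder for `tagEncode`: it returns the message part if all tags are correct, and
`none`, standing for the rejection symbol `⊥`, otherwise. -/
noncomputable def tagDecode (tag : M → K → T) (c : M × (Fin s → K) × (Fin s → T)) : Option M :=
  if ∀ j, c.2.2 j = tag c.1 (c.2.1 j) then some c.1 else none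

theorem tagEncode_injective (tag : M → K → T) :
    Function.Injective (tagEncode tag : M × (Fin s → K) → _) := by
  rintro ⟨m, x⟩ ⟨m', x'⟩ h
  simp only [tagEncode, Prod.mk.injEq] at h
  exact Prod.ext h.1 h.2.1

theorem tagDecode_tagEncode (tag : M → K → T) (m : M) (x : Fin s → K) :
    tagDecode tag (tagEncode tag (m, x)) = some m :=
  if_pos fun _ => rfl

theorem tagDecode_notMem_iff (tag : M → K → T) (m : M) (c : M × (Fin s → K) × (Fin s → T)) :
    tagDecode tag c ∉ ({some m, none} : Set (Option M)) ↔
      c.1 ≠ m ∧ ∀ j, c.2.2 j = tag c.1 (c.2.1 j) := by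
  unfold tagDecode
  split_ifs with h <;> simp [h]

theorem card_tagDecode_notMem_le [AddZeroClass M] [Add K] [Add T] [Fintype K] {tag : M → K → T}
    {m α : M} {n : ℕ}
    (htag : α ≠ 0 → ∀ b c, (Finset.univ.filter fun a => tag m a + c = tag (m + α) (a + b)).card ≤ n)
    (β : Fin s → K) (γ : Fin s → T) :
    (Finset.univ.filter fun x : Fin s → K =>
      tagDecode tag (tagEncode tag (m, x) + (α, β, γ))
        ∉ ({some m, none} : Set (Option M))).card ≤ n ^ s := by
  simp only [tagDecode_notMem_iff]
  rcases eq_or_ne α 0 with rfl | hα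
  · simp [tagEncode]
  let forgedKeys (j : Fin s) : Finset K :=
    Finset.univ.filter fun a => tag m a + γ j = tag (m + α) (a + β j)
  calc
    _ ≤ (Fintype.piFinset forgedKeys).card := Finset.card_le_card fun x hx =>
      Fintype.mem_piFinset.2 fun j =>
        Finset.mem_filter.2 ⟨Finset.mem_univ _, (Finset.mem_filter.1 hx).2.2 j⟩
    _ = ∏ j, (forgedKeys j).card := Fintype.card_piFinset forgedKeys
    _ ≤ n ^ s := by
      simpa using Finset.prod_le_pow_card Finset.univ (fun j => (forgedKeys j).card) n
        fun j _ => htag hα (β j) (γ j)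

end Tagging

theorem coeff_taylor_of_natDegree_le_succ {R : Type*} [Semiring R] {p : R[X]} {n : ℕ}
    (hp : p.natDegree ≤ n + 1) (b : R) :
    (taylor b p).coeff n = p.coeff n + ((n + 1 : ℕ) : R) * p.coeff (n + 1) * b := by
  have hderiv : (hasseDeriv n p).natDegree ≤ 1 := (natDegree_hasseDeriv_le p n).trans (by omega)
  rw [taylor_coeff, eq_X_add_C_of_natDegree_le_one hderiv, eval_add, eval_mul_X, eval_C, eval_C,
    hasseDeriv_coeff, hasseDeriv_coeff, zero_add, Nat.choose_self, Nat.cast_one, one_mul,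
    add_comm 1 n, Nat.choose_succ_self_right, add_comm]

theorem card_filter_eval_eq_lt_natDegree {R : Type*} [CommRing R] [IsDomain R] [Fintype R]
    {p q : R[X]} (hp : p.Monic) (hq : q.Monic) (hdeg : p.natDegree = q.natDegree) (hne : p ≠ q) :
    (Finset.univ.filter fun a => p.eval a = q.eval a).card < p.natDegree := by
  by_contra! hcard
  refine hne (eq_of_degree_le_of_eval_finset_eq
    (Finset.univ.filter fun a => p.eval a = q.eval a) ?_ ?_ ?_ ?_)
  · exact degree_le_of_natDegree_le hcard
  · rw [degree_eq_natDegree hp.ne_zero, degree_eq_natDegree hq.ne_zero, hdeg]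
  · rw [hp.leadingCoeff, hq.leadingCoeff]
  · exact fun a ha => (Finset.mem_filter.1 ha).2

section PowerTag

variable {R : Type*} {k : ℕ}

/-- The tag function `f(m, a) = a ^ (k + 2) + ∑ i = 1, …, k, m_i a ^ i` of the code. Message
coordinates are indexed from `0`, so `m i` multiplies `a ^ (i + 1)`. -/
def powerTag [Semiring R] (m : Fin k → R) (a : R) : R :=
  a ^ (k + 2) + ∑ i : Fin k, m i * a ^ ((i : ℕ) + 1)

/-- The polynomial `f(m, X)`, whose values are the tags `powerTag m`. -/
noncomputable def tagPolynomial [Semiring R] (m : Fin k → R) : R[X] :=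
  X ^ (k + 2) + ∑ i : Fin k, C (m i) * X ^ ((i : ℕ) + 1)

section Semiring

variable [Semiring R]

theorem eval_tagPolynomial (m : Fin k → R) (a : R) :
    (tagPolynomial m).eval a = powerTag m a := by
  simp [tagPolynomial, powerTag, eval_finsetSum, eval_X_pow]

theorem coeff_tagPolynomial_val_add_one (m : Fin k → R) (i : Fin k) :
    (tagPolynomial m).coeff (i + 1) = m i := by
  have hi : (i : ℕ) ≠ k + 1 := by omega
  simp [tagPolynomial, coeff_X_pow, Fin.val_inj, hi]

theorem coeff_tagPolynomial_add_one (m : Fin k → R) : (tagPolynomial m).coeff (k + 1) = 0 := by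
  have hi (i : Fin k) : k ≠ i := by omega
  simp [tagPolynomial, coeff_X_pow, hi]

theorem natDegree_sum_C_mul_X_pow_succ_le (m : Fin k → R) :
    (∑ i : Fin k, C (m i) * X ^ ((i : ℕ) + 1)).natDegree ≤ k :=
  natDegree_sum_le_of_forall_le _ _ fun i _ => (natDegree_C_mul_X_pow_le _ _).trans i.2

theorem monic_tagPolynomial (m : Fin k → R) : (tagPolynomial m).Monic :=
  monic_X_pow_add <| (degree_le_of_natDegree_le (natDegree_sum_C_mul_X_pow_succ_le m)).trans_lt <|
    Nat.cast_lt.2 (by omega)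

theorem natDegree_tagPolynomial [Nontrivial R] (m : Fin k → R) :
    (tagPolynomial m).natDegree = k + 2 := by
  have hsum := natDegree_sum_C_mul_X_pow_succ_le m
  rw [tagPolynomial, natDegree_add_eq_left_of_natDegree_lt, natDegree_X_pow]
  rw [natDegree_X_pow]
  omega

end Semiring

variable [CommRing R] [IsDomain R]

theorem eq_of_taylor_tagPolynomial_eq (hchar : ((k + 2 : ℕ) : R) ≠ 0) {m m' : Fin k → R} {b c : R}
    (h : taylor b (tagPolynomial m') = tagPolynomial m + C c) : m' = m := by
  have hb : b = 0 := by
    have hcoeff : (taylor b (tagPolynomial m')).coeff (k + 1) = ((k + 2 : ℕ) : R) * b := by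
      have hlead : (tagPolynomial m').coeff (k + 2) = 1 := by
        simpa only [natDegree_tagPolynomial] using (monic_tagPolynomial m').coeff_natDegree
      rw [coeff_taylor_of_natDegree_le_succ (natDegree_tagPolynomial m').le,
        coeff_tagPolynomial_add_one, hlead, zero_add, mul_one]
    rw [h, coeff_add, coeff_tagPolynomial_add_one, coeff_C_succ, add_zero] at hcoeff
    exact (mul_eq_zero.1 hcoeff.symm).resolve_left hchar
  rw [hb, taylor_zero] at h
  funext i
  rw [← coeff_tagPolynomial_val_add_one m', h, coeff_add, coeff_C_succ, add_zero,
    coeff_tagPolynomial_val_add_one]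

theorem card_filter_powerTag_add_eq_le [Fintype R] (hchar : ((k + 2 : ℕ) : R) ≠ 0)
    {m m' : Fin k → R} (hm : m' ≠ m) (b c : R) :
    (Finset.univ.filter fun a => powerTag m a + c = powerTag m' (a + b)).card ≤ k + 1 := by
  have hmonic : (tagPolynomial m + C c).Monic := by
    refine (monic_tagPolynomial m).add_of_left (degree_C_le.trans_lt ?_)
    rw [← natDegree_pos_iff_degree_pos, natDegree_tagPolynomial]
    omega
  have hmonic' : (taylor b (tagPolynomial m')).Monic :=
    (leadingCoeff_taylor b _).trans (monic_tagPolynomial m')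
  have hdeg : (tagPolynomial m + C c).natDegree = (taylor b (tagPolynomial m')).natDegree := by
    simp only [natDegree_add_C, natDegree_taylor, natDegree_tagPolynomial]
  have hlt := card_filter_eval_eq_lt_natDegree hmonic hmonic' hdeg
    fun h => hm (eq_of_taylor_tagPolynomial_eq hchar h.symm)
  simpa only [natDegree_add_C, natDegree_tagPolynomial, eval_add, eval_C, taylor_eval,
    eval_tagPolynomial, Nat.lt_succ_iff] using hlt

end PowerTag

/-- the coding scheme `Enc(m,x) = (m, x, f(m,x_1), …, f(m,x_σ))` with
`f(m,a) = a^{k+2} + Σ_{i=1}^k m_i a^i` and the natural decoder is a regular coding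
scheme and a strong `(0, ((k+1)/q)^σ)`-AMD code. -/
theorem stmt8 {F : Type*} [Field F] [Fintype F] (k σn : ℕ)
    (hk : 0 < k) (hσ : 0 < σn) (hchar : ((k + 2 : ℕ) : F) ≠ 0) :
    let f : (Fin k → F) → F → F :=
      fun m a => a ^ (k + 2) + ∑ i : Fin k, m i * a ^ ((i : ℕ) + 1)
    let Enc : (Fin k → F) × (Fin σn → F) → (Fin k → F) × (Fin σn → F) × (Fin σn → F) :=
      fun mx => (mx.1, mx.2, fun j => f mx.1 (mx.2 j))
    let Dec : (Fin k → F) × (Fin σn → F) × (Fin σn → F) → Option (Fin k → F) :=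
      fun c => if ∀ j, c.2.2 j = f c.1 (c.2.1 j) then some c.1 else none
    -- regular coding scheme
    Function.Injective Enc ∧
    (∀ (m : Fin k → F) (x : Fin σn → F), Dec (Enc (m, x)) = some m) ∧
    -- strong (0, ((k+1)/q)^σ)-AMD security: for every message and fixed offset,
    -- over a uniformly random x the tampering succeeds w.p. at most ((k+1)/q)^σ
    (∀ (m α : Fin k → F) (β γ : Fin σn → F),
      ((Finset.univ.filter (fun x : Fin σn → F =>
          Dec (Enc (m, x) + (α, β, γ))
            ∉ ({some m, none} : Set (Option (Fin k → F))))).card : ℝ)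
        / (Fintype.card F : ℝ) ^ σn
        ≤ (((k : ℝ) + 1) / (Fintype.card F : ℝ)) ^ σn) := by
  intro f Enc Dec
  have hEnc : Enc = tagEncode powerTag := rfl
  have hDec : Dec = tagDecode powerTag := rfl
  rw [hEnc, hDec]
  refine ⟨tagEncode_injective powerTag, tagDecode_tagEncode powerTag, fun m α β γ => ?_⟩
  rw [div_pow]
  gcongr
  norm_cast
  -- `convert` rather than `exact`: the decidability instances of the two filters differ.
  convert card_tagDecode_notMem_le (m := m) (α := α)
    (fun hα => card_filter_powerTag_add_eq_le hchar (add_ne_left.2 hα)) β γ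
end
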